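/- For every q > 0 and every σ > 1433/1248, for Lebesgue-almost every θ ∈ ℝ there exists K > 0 such that θ is a (q, K, σ)-Diophantine 2D rotation, i.e., for all n ∈ ℤ² \ {0} and both choices of sign, dist(q^{±1} A^T R_{±θ} A^{−T} n, ℤ²) ≥ K / |n|^{2σ}. -/

import Mathlib

open scoped Real BigOperators
open MeasureTheory Filter Topology Matrix

noncomputable section

/-- The 2×2 rotation matrix through angle `φ`. -/
def Rot (φ : ℝ) : Matrix (Fin 2) (Fin 2) ℝ :=
  !![Real.cos φ, -Real.sin φ; Real.sin φ, Real.cos φ]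

/-- Euclidean norm on `ℝ²`. -/
def norm2 (v : Fin 2 → ℝ) : ℝ := Real.sqrt (v 0 ^ 2 + v 1 ^ 2)

/-- Euclidean norm on `ℝ³`. -/
def norm3 (v : Fin 3 → ℝ) : ℝ := Real.sqrt (v 0 ^ 2 + v 1 ^ 2 + v 2 ^ 2)

/-- Cast an integer vector to a real vector. -/
def iv (n : Fin 2 → ℤ) : Fin 2 → ℝ := fun i => (n i : ℝ)

/-- The lattice `M ℤ²`. -/
def lat (M : Matrix (Fin 2) (Fin 2) ℝ) : Set (Fin 2 → ℝ) :=
  {v | ∃ n : Fin 2 → ℤ, v = M.mulVec (iv n)}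

/-- The unit cell `M [0,1)²`. -/
def cell (M : Matrix (Fin 2) (Fin 2) ℝ) : Set (Fin 2 → ℝ) :=
  {v | ∃ t : Fin 2 → ℝ, (∀ i, t i ∈ Set.Ico (0 : ℝ) 1) ∧ v = M.mulVec t}

/-- The reciprocal matrix `2π M⁻ᵀ`. -/
def recip (M : Matrix (Fin 2) (Fin 2) ℝ) : Matrix (Fin 2) (Fin 2) ℝ :=
  (2 * π) • (M⁻¹)ᵀ

/-- A pair of lattices with reciprocal-lattice matrices `B1`, `B2` is incommensurate iff
`G₁ + G₂ = 0` with `G_k` in the respective reciprocal lattice implies `G₁ = G₂ = 0`. -/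
def Incommensurate (B1 B2 : Matrix (Fin 2) (Fin 2) ℝ) : Prop :=
  ∀ G1 ∈ lat B1, ∀ G2 ∈ lat B2, G1 + G2 = 0 → G1 = 0 ∧ G2 = 0

/-- Euclidean distance from `v ∈ ℝ²` to the integer lattice `ℤ²`. -/
def distZ2 (v : Fin 2 → ℝ) : ℝ := ⨅ m : Fin 2 → ℤ, norm2 (v - iv m)

/-- `θ` is a `(q,K,σ)`-Diophantine 2D rotation. -/
def IsDiophantine (A : Matrix (Fin 2) (Fin 2) ℝ) (q K σ θ : ℝ) : Prop :=
  ∀ n : Fin 2 → ℤ, n ≠ 0 →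
    K / norm2 (iv n) ^ (2 * σ) ≤ distZ2 ((q • (Aᵀ * Rot θ * (A⁻¹)ᵀ)).mulVec (iv n)) ∧
    K / norm2 (iv n) ^ (2 * σ) ≤ distZ2 ((q⁻¹ • (Aᵀ * Rot (-θ) * (A⁻¹)ᵀ)).mulVec (iv n))

/-- The moiré length scale ratio `ρ_𝓜`. -/
def rhoM (q θ : ℝ) : ℝ :=
  (Real.sqrt ((Real.sqrt q - (Real.sqrt q)⁻¹) ^ 2 + 4 * Real.sin (θ / 2) ^ 2))⁻¹

/-- Riemann zeta function (for real `s > 1`, via its Dirichlet series). -/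
def zetaR (s : ℝ) : ℝ := ∑' n : ℕ, ((n : ℝ) + 1) ^ (-s)

/-- Operator (spectral) norm of a 2×2 real matrix w.r.t. the Euclidean norm. -/
def opNorm2 (M : Matrix (Fin 2) (Fin 2) ℝ) : ℝ :=
  ⨆ x : {x : Fin 2 → ℝ // norm2 x ≤ 1}, norm2 (M.mulVec x.1)

/-- Embedding `ℝ² ↪ ℝ³`, `x ↦ (x, 0)`. -/
def emb (x : Fin 2 → ℝ) : Fin 3 → ℝ := ![x 0, x 1, 0]

/-- Japanese bracket `⟨x⟩ = (1 + |x|²)^{1/2}` on `ℝ³`. -/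
def jap3 (x : Fin 3 → ℝ) : ℝ := Real.sqrt (1 + norm3 x ^ 2)

/-- The region `ℝ² × [−L, L] ⊆ ℝ³`. -/
def slab (L : ℝ) : Set (Fin 3 → ℝ) := {x | x 2 ∈ Set.Icc (-L) L}

/-- Euclidean inner product on `ℝ²`. -/
def dot2 (a b : Fin 2 → ℝ) : ℝ := ∑ i, a i * b i

/-- The index box `⟦−N, N⟧²`. -/
def box (N : ℕ) : Finset (Fin 2 → ℤ) :=
  Finset.Icc (fun _ => -(N : ℤ)) (fun _ => (N : ℤ))

/-- The normalized Dirichlet kernel `Δ_N^j` of the lattice `A_j ℤ²`. -/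
def Dir (Aj : Matrix (Fin 2) (Fin 2) ℝ) (N : ℕ) (G : Fin 2 → ℝ) : ℂ :=
  (((2 * N + 1 : ℝ)) ^ 2)⁻¹ •
    ∑ n ∈ box N, Complex.exp (Complex.I * (dot2 G (Aj.mulVec (iv n)) : ℝ))

/-!
The curve `θ ↦ q Aᵀ R_θ A⁻ᵀ n` is bi-Lipschitz on unit intervals, with both constants comparable to
`|n|`. Hence it passes within `ε` of `ℤ²` on `O(|n|)` pieces of length `O(ε / |n|)` each, and on a
unit interval the bad angles for `n` have measure `O(ε)`, uniformly in `n`. With `ε = K |n| ^ (-2σ)`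
the union over all `n` has measure `O(K)`, because `∑ |n| ^ (-2σ)` converges for `σ > 1`, and the
angles that are bad for every `K > 0` form a null set.
-/

theorem ae_exists_pos_forall_notMem {α ι : Type*} [MeasurableSpace α] {μ : Measure α}
    {S : ι → ℝ → Set α} {w : ι → ℝ} {C : ℝ} (hw : ∀ i, 0 < w i) (hsum : Summable w)
    (hS : ∀ i, ∀ ε > 0, μ (S i ε) ≤ ENNReal.ofReal (C * ε)) :
    ∀ᵐ x ∂μ, ∃ K > 0, ∀ i, x ∉ S i (K * w i) := by
  have : Countable ι := Set.countable_univ_iff.mp <| by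
    simpa [Function.support, (hw _).ne'] using hsum.countable_support
  set T := ∑' i, ENNReal.ofReal (C * w i)
  have bad_le (K : ℝ) (hK : 0 < K) :
      μ {x | ¬∃ K > 0, ∀ i, x ∉ S i (K * w i)} ≤ ENNReal.ofReal K * T :=
    calc
      _ ≤ μ (⋃ i, S i (K * w i)) := measure_mono fun x hx ↦ by
        by_contra h
        exact hx ⟨K, hK, by simpa using h⟩
      _ ≤ ∑' i, μ (S i (K * w i)) := measure_iUnion_le _
      _ ≤ ∑' i, ENNReal.ofReal K * ENNReal.ofReal (C * w i) := ENNReal.tsum_le_tsum fun i ↦ by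
        rw [← ENNReal.ofReal_mul hK.le, mul_left_comm]
        exact hS i _ (mul_pos hK (hw i))
      _ = ENNReal.ofReal K * T := ENNReal.tsum_mul_left
  have tendsto_zero : Tendsto (fun K ↦ ENNReal.ofReal K * T) (𝓝[>] 0) (𝓝 0) := by
    have hT : T ≠ ⊤ := (hsum.mul_left C).tsum_ofReal_ne_top
    simpa using (ENNReal.Tendsto.mul_const (ENNReal.tendsto_ofReal (tendsto_id (x := 𝓝 (0 : ℝ))))
      (.inr hT)).mono_left nhdsWithin_le_nhds
  exact le_antisymm (ge_of_tendsto tendsto_zero (eventually_mem_nhdsWithin.mono bad_le)) zero_le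

theorem volume_le_of_small_gaps {S : Set ℝ} {a b r d : ℝ} (hr : 0 < r) (hS : S ⊆ Set.Icc a b)
    (hd : ∀ s ∈ S, ∀ t ∈ S, |s - t| ≤ r → |s - t| ≤ d) :
    volume S ≤ ENNReal.ofReal (((b - a) / r + 1) * d) := by
  obtain rfl | ⟨s₀, hs₀⟩ := S.eq_empty_or_nonempty
  · simp
  have hab : 0 ≤ b - a := sub_nonneg.mpr ((hS hs₀).1.trans (hS hs₀).2)
  have hd₀ : 0 ≤ d := by simpa using hd s₀ hs₀ s₀ hs₀ (by simpa using hr.le)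
  set N := ⌊(b - a) / r⌋₊ + 1
  let piece (j : ℕ) : Set ℝ := S ∩ Set.Icc (a + j * r) (a + (j + 1) * r)
  have cover : S ⊆ ⋃ j ∈ Finset.range N, piece j := by
    intro s hs
    obtain ⟨has, hsb⟩ := hS hs
    have floor_le : (⌊(s - a) / r⌋₊ : ℝ) ≤ (s - a) / r :=
      Nat.floor_le (div_nonneg (sub_nonneg.mpr has) hr.le)
    have lt_floor : (s - a) / r < ⌊(s - a) / r⌋₊ + 1 := Nat.lt_floor_add_one _
    rw [le_div_iff₀ hr] at floor_le
    rw [div_lt_iff₀ hr] at lt_floor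
    refine Set.mem_biUnion (x := ⌊(s - a) / r⌋₊) ?_ ⟨hs, by linarith, by linarith⟩
    exact Finset.mem_range.mpr (Nat.lt_succ_of_le (Nat.floor_le_floor (by gcongr)))
  have piece_le (j : ℕ) : volume (piece j) ≤ ENNReal.ofReal d := by
    refine (Real.volume_le_diam _).trans (Metric.ediam_le ?_)
    rintro s ⟨hs, hs₁, hs₂⟩ t ⟨ht, ht₁, ht₂⟩
    rw [edist_dist, Real.dist_eq]
    exact ENNReal.ofReal_le_ofReal (hd s hs t ht (abs_le.mpr ⟨by linarith, by linarith⟩))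
  calc
    volume S ≤ ∑ j ∈ Finset.range N, volume (piece j) :=
      (measure_mono cover).trans (measure_biUnion_finset_le _ _)
    _ ≤ N * ENNReal.ofReal d := by
      simpa using Finset.sum_le_card_nsmul (Finset.range N) _ _ fun j _ ↦ piece_le j
    _ = ENNReal.ofReal (N * d) := by
      rw [ENNReal.ofReal_mul N.cast_nonneg, ENNReal.ofReal_natCast]
    _ ≤ ENNReal.ofReal (((b - a) / r + 1) * d) := by
      gcongr
      simpa [N] using Nat.floor_le (div_nonneg hab hr.le)

theorem volume_Icc_inter_preimage_thickening_le {X : Type*} [PseudoMetricSpace X] {γ : ℝ → X}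
    {Λ : Set X} {a b c L δ ε : ℝ} (hc : 0 < c) (hδ : 0 < δ)
    (lower : ∀ s ∈ Set.Icc a b, ∀ t ∈ Set.Icc a b, c * |s - t| ≤ dist (γ s) (γ t))
    (upper : ∀ s ∈ Set.Icc a b, ∀ t ∈ Set.Icc a b, dist (γ s) (γ t) ≤ L * |s - t|)
    (hΛ : Λ.Pairwise fun x y ↦ δ ≤ dist x y) :
    volume (Set.Icc a b ∩ γ ⁻¹' Metric.thickening ε Λ) ≤
      ENNReal.ofReal ((2 * L * (b - a) / δ + 1) * (2 * ε / c)) := by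
  obtain hba | hab := le_or_gt b a
  · refine (measure_mono Set.inter_subset_left).trans ?_
    simp [ENNReal.ofReal_of_nonpos (sub_nonpos.mpr hba)]
  have hcL : c ≤ L := by
    have ha : a ∈ Set.Icc a b := Set.left_mem_Icc.mpr hab.le
    have hb : b ∈ Set.Icc a b := Set.right_mem_Icc.mpr hab.le
    exact le_of_mul_le_mul_right ((lower b hb a ha).trans (upper b hb a ha))
      (abs_pos.mpr (sub_pos.mpr hab).ne')
  have hL : 0 < L := hc.trans_le hcL
  obtain hε | hε := le_or_gt ε (δ / 4)
  · have key := volume_le_of_small_gaps (S := Set.Icc a b ∩ γ ⁻¹' Metric.thickening ε Λ)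
      (r := δ / (2 * L)) (d := 2 * ε / c) (by positivity) Set.inter_subset_left ?_
    · convert key using 4
      field_simp
    rintro s ⟨hs, hsΛ⟩ t ⟨ht, htΛ⟩ hst
    obtain ⟨x, hx, hsx⟩ := Metric.mem_thickening_iff.mp hsΛ
    obtain ⟨y, hy, hty⟩ := Metric.mem_thickening_iff.mp htΛ
    have dist_le : dist (γ s) (γ t) ≤ δ / 2 := by
      refine (upper s hs t ht).trans ?_
      rw [le_div_iff₀ (by positivity)] at hst
      linarith
    have same_point : x = y := hΛ.eq hx hy <| not_le.mpr <| by
      linarith [dist_triangle4 x (γ s) (γ t) y, dist_comm x (γ s)]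
    subst same_point
    rw [le_div_iff₀ hc]
    linarith [lower s hs t ht, dist_triangle_right (γ s) (γ t) x]
  · -- For large `ε` the bound exceeds the length of the interval.
    refine (measure_mono Set.inter_subset_left).trans ?_
    rw [Real.volume_Icc]
    apply ENNReal.ofReal_le_ofReal
    have one_le : 1 ≤ L / c * (4 * ε / δ) :=
      one_le_mul_of_one_le_of_one_le ((one_le_div hc).mpr hcL) ((one_le_div hδ).mpr (by linarith))
    have hε₀ : 0 < ε := by linarith
    calc
      b - a ≤ (b - a) * (L / c * (4 * ε / δ)) := le_mul_of_one_le_right (sub_pos.mpr hab).le one_le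
      _ = 2 * L * (b - a) / δ * (2 * ε / c) := by ring
      _ ≤ (2 * L * (b - a) / δ + 1) * (2 * ε / c) := by gcongr; linarith

section ComplexRotation

variable {E : Type*} [SeminormedAddCommGroup E] [NormedSpace ℝ E]

/-- The rotation `exp (θ J) = cos θ + (sin θ) J` generated by an operator `J`. It is a one-parameter
group when `J` is a complex structure, i.e. `J * J = -1`. -/
def complexRotation (J : E →L[ℝ] E) (θ : ℝ) : E →L[ℝ] E :=
  Real.cos θ • (1 : E →L[ℝ] E) + Real.sin θ • J

theorem complexRotation_sub (J : E →L[ℝ] E) (s t : ℝ) :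
    complexRotation J s - complexRotation J t =
      (2 * Real.sin ((s - t) / 2)) • complexRotation J ((s + t) / 2 + π / 2) := by
  simp only [complexRotation, Real.cos_add_pi_div_two, Real.sin_add_pi_div_two]
  calc
    _ = (Real.cos s - Real.cos t) • (1 : E →L[ℝ] E) + (Real.sin s - Real.sin t) • J := by module
    _ = _ := by rw [Real.cos_sub_cos, Real.sin_sub_sin]; module

theorem norm_complexRotation_apply_le (J : E →L[ℝ] E) (θ : ℝ) (x : E) :
    ‖complexRotation J θ x‖ ≤ (1 + ‖J‖) * ‖x‖ :=
  calc
    ‖complexRotation J θ x‖ ≤ |Real.cos θ| * ‖x‖ + |Real.sin θ| * ‖J x‖ := by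
      simpa [complexRotation, norm_smul] using
        norm_add_le (Real.cos θ • x) (Real.sin θ • J x)
    _ ≤ 1 * ‖x‖ + 1 * (‖J‖ * ‖x‖) := by
      gcongr
      exacts [Real.abs_cos_le_one θ, Real.abs_sin_le_one θ, J.le_opNorm x]
    _ = (1 + ‖J‖) * ‖x‖ := by ring

theorem complexRotation_neg_mul_self {J : E →L[ℝ] E} (hJ : J * J = -1) (θ : ℝ) :
    complexRotation J (-θ) * complexRotation J θ = 1 := by
  simp only [complexRotation, Real.cos_neg, Real.sin_neg, mul_add, add_mul, smul_mul_smul, one_mul,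
    mul_one, hJ]
  calc
    _ = (Real.sin θ ^ 2 + Real.cos θ ^ 2) • (1 : E →L[ℝ] E) := by module
    _ = 1 := by rw [Real.sin_sq_add_cos_sq, one_smul]

theorem norm_le_norm_complexRotation_apply {J : E →L[ℝ] E} (hJ : J * J = -1) (θ : ℝ) (x : E) :
    ‖x‖ ≤ (1 + ‖J‖) * ‖complexRotation J θ x‖ := by
  have h := norm_complexRotation_apply_le J (-θ) (complexRotation J θ x)
  rwa [← mul_apply_eq_comp, complexRotation_neg_mul_self hJ, one_apply_eq_self] at h

theorem dist_complexRotation_apply (J : E →L[ℝ] E) (s t : ℝ) (x : E) :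
    dist (complexRotation J s x) (complexRotation J t x) =
      2 * |Real.sin ((s - t) / 2)| * ‖complexRotation J ((s + t) / 2 + π / 2) x‖ := by
  rw [dist_eq_norm, ← _root_.sub_apply, complexRotation_sub, _root_.smul_apply,
    norm_smul, norm_mul, Real.norm_ofNat, Real.norm_eq_abs]

theorem dist_complexRotation_apply_le (J : E →L[ℝ] E) (s t : ℝ) (x : E) :
    dist (complexRotation J s x) (complexRotation J t x) ≤ (1 + ‖J‖) * ‖x‖ * |s - t| := by
  have abs_sin_le : 2 * |Real.sin ((s - t) / 2)| ≤ |s - t| := by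
    have := Real.abs_sin_le_abs (x := (s - t) / 2)
    rw [abs_div, abs_two] at this
    linarith
  rw [dist_complexRotation_apply, mul_comm _ |s - t|]
  gcongr
  exact norm_complexRotation_apply_le J _ x

theorem le_dist_complexRotation_apply {J : E →L[ℝ] E} (hJ : J * J = -1) {s t : ℝ}
    (hst : |s - t| ≤ π) (x : E) :
    2 * ‖x‖ / (π * (1 + ‖J‖)) * |s - t| ≤
      dist (complexRotation J s x) (complexRotation J t x) := by
  have le_abs_sin : 2 / π * |s - t| ≤ 2 * |Real.sin ((s - t) / 2)| := by
    have := Real.mul_abs_le_abs_sin (x := (s - t) / 2) (by rw [abs_div, abs_two]; linarith)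
    rw [abs_div, abs_two] at this
    linarith
  have hM : 0 < 1 + ‖J‖ := by positivity
  rw [dist_complexRotation_apply]
  calc
    _ = 2 / π * |s - t| * (‖x‖ / (1 + ‖J‖)) := by field_simp
    _ ≤ _ := by
      gcongr
      rw [div_le_iff₀' hM]
      exact norm_le_norm_complexRotation_apply hJ _ x

theorem volume_Icc_inter_complexRotation_thickening_le {J : E →L[ℝ] E} (hJ : J * J = -1)
    {a δ ε r : ℝ} {Λ : Set E} {x : E} (hδ : 0 < δ) (hΛ : Λ.Pairwise fun x y ↦ δ ≤ dist x y)
    (hr : 0 < r) (hx : r ≤ ‖x‖) (hε : 0 ≤ ε) :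
    volume (Set.Icc a (a + 1) ∩ (complexRotation J · x) ⁻¹' Metric.thickening ε Λ) ≤
      ENNReal.ofReal ((2 * (1 + ‖J‖) / δ + 1 / r) * (π * (1 + ‖J‖)) * ε) := by
  have hx₀ : 0 < ‖x‖ := hr.trans_le hx
  have abs_sub_le_pi (s) (hs : s ∈ Set.Icc a (a + 1)) (t) (ht : t ∈ Set.Icc a (a + 1)) :
      |s - t| ≤ π := by
    linarith [abs_sub_le_of_le_of_le hs.1 hs.2 ht.1 ht.2, Real.pi_gt_three]
  refine (volume_Icc_inter_preimage_thickening_le (by positivity) hδ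
    (fun s hs t ht ↦ le_dist_complexRotation_apply hJ (abs_sub_le_pi s hs t ht) x)
    (fun s _ t _ ↦ dist_complexRotation_apply_le J s t x) hΛ).trans
    (ENNReal.ofReal_le_ofReal ?_)
  calc
    _ = (2 * (1 + ‖J‖) / δ + 1 / ‖x‖) * (π * (1 + ‖J‖)) * ε := by field_simp; ring
    _ ≤ _ := by gcongr

theorem ae_exists_pos_forall_le_dist_complexRotation {ι : Type*} {J : E →L[ℝ] E} (hJ : J * J = -1)
    {δ r : ℝ} {Λ : Set E} {v : ι → E} {w : ι → ℝ} (hδ : 0 < δ)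
    (hΛ : Λ.Pairwise fun x y ↦ δ ≤ dist x y) (hr : 0 < r) (hv : ∀ i, r ≤ ‖v i‖)
    (hw : ∀ i, 0 < w i) (hsum : Summable w) :
    ∀ᵐ θ : ℝ, ∃ K > 0, ∀ i, ∀ m ∈ Λ, K * w i ≤ dist (complexRotation J θ (v i)) m := by
  rw [← Measure.restrict_univ (μ := volume), ← iUnion_Icc_intCast ℝ, ae_restrict_iUnion_iff]
  intro k
  have h := ae_exists_pos_forall_notMem (μ := volume.restrict (Set.Icc (k : ℝ) (k + 1)))
    (S := fun i ε ↦ (complexRotation J · (v i)) ⁻¹' Metric.thickening ε Λ) hw hsum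
    fun i ε hε ↦ by
      rw [Measure.restrict_apply' measurableSet_Icc, Set.inter_comm]
      exact volume_Icc_inter_complexRotation_thickening_le hJ hδ hΛ hr (hv i) hε.le
  simpa [Metric.mem_thickening_iff] using h

end ComplexRotation

theorem norm2_nonneg (v : Fin 2 → ℝ) : 0 ≤ norm2 v := Real.sqrt_nonneg _

theorem norm2_eq_norm_toLp (v : Fin 2 → ℝ) : norm2 v = ‖WithLp.toLp 2 v‖ := by
  simp [norm2, EuclideanSpace.norm_eq]

theorem norm_le_norm2 (v : Fin 2 → ℝ) : ‖v‖ ≤ norm2 v := by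
  rw [norm2_eq_norm_toLp, pi_norm_le_iff_of_nonneg (norm_nonneg _)]
  exact PiLp.norm_apply_le (WithLp.toLp 2 v)

theorem iv_sub (m n : Fin 2 → ℤ) : iv (m - n) = iv m - iv n := by
  ext i
  simp [iv]

theorem norm_iv (n : Fin 2 → ℤ) : ‖iv n‖ = ‖n‖ := by
  have nnnorm_cast (z : ℤ) : ‖(z : ℝ)‖₊ = ‖z‖₊ := NNReal.eq (Int.norm_cast_real z)
  simp [iv, Pi.norm_def, nnnorm_cast]

theorem one_le_norm2_iv {n : Fin 2 → ℤ} (hn : n ≠ 0) : 1 ≤ norm2 (iv n) := by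
  obtain ⟨i, hi⟩ := Function.ne_iff.mp hn
  calc
    (1 : ℝ) ≤ |(n i : ℝ)| := mod_cast Int.one_le_abs hi
    _ ≤ ‖iv n‖ := norm_le_pi_norm (iv n) i
    _ ≤ norm2 (iv n) := norm_le_norm2 _

theorem summable_norm2_iv_rpow {s : ℝ} (hs : 2 < s) :
    Summable fun n : {n : Fin 2 → ℤ // n ≠ 0} ↦ norm2 (iv n) ^ (-s) := by
  refine .of_nonneg_of_le (fun n ↦ Real.rpow_nonneg (norm2_nonneg _) _) (fun n ↦ ?_)
    ((EisensteinSeries.summable_one_div_norm_rpow hs).subtype {n | n ≠ 0})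
  have norm_pos : 0 < ‖(n : Fin 2 → ℤ)‖ := norm_pos_iff.mpr n.2
  exact Real.rpow_le_rpow_of_nonpos norm_pos (norm_iv n ▸ norm_le_norm2 _) (by linarith)

theorem pairwise_one_le_dist_range_iv :
    (Set.range fun n ↦ WithLp.toLp 2 (iv n)).Pairwise fun x y ↦ 1 ≤ dist x y := by
  rintro _ ⟨m, rfl⟩ _ ⟨n, rfl⟩ hmn
  rw [dist_eq_norm, ← WithLp.toLp_sub, ← norm2_eq_norm_toLp, ← iv_sub]
  exact one_le_norm2_iv (sub_ne_zero.mpr fun h ↦ hmn (by rw [h]))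

theorem Rot_eq_cos_add_sin (θ : ℝ) :
    Rot θ = Real.cos θ • (1 : Matrix (Fin 2) (Fin 2) ℝ) + Real.sin θ • Rot (π / 2) := by
  ext i j
  fin_cases i <;> fin_cases j <;> simp [Rot]

theorem Rot_pi_div_two_mul_self : Rot (π / 2) * Rot (π / 2) = -1 := by
  ext i j
  fin_cases i <;> fin_cases j <;> simp [Rot, Matrix.mul_apply]

theorem transpose_mul_transpose_inv {n R : Type*} [Fintype n] [DecidableEq n] [CommRing R]
    {A : Matrix n n R} (hA : IsUnit A.det) : Aᵀ * (A⁻¹)ᵀ = 1 := by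
  rw [← transpose_mul, nonsing_inv_mul _ hA, transpose_one]

theorem conj_Rot_pi_div_two_mul_self {A : Matrix (Fin 2) (Fin 2) ℝ} (hA : IsUnit A.det) :
    (Aᵀ * Rot (π / 2) * (A⁻¹)ᵀ) * (Aᵀ * Rot (π / 2) * (A⁻¹)ᵀ) = -1 := by
  have h := mul_eq_one_comm.mp (transpose_mul_transpose_inv hA)
  calc
    _ = Aᵀ * Rot (π / 2) * ((A⁻¹)ᵀ * Aᵀ) * Rot (π / 2) * (A⁻¹)ᵀ := by simp only [Matrix.mul_assoc]
    _ = Aᵀ * (Rot (π / 2) * Rot (π / 2)) * (A⁻¹)ᵀ := by rw [h, mul_one, Matrix.mul_assoc Aᵀ]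
    _ = -1 := by
      rw [Rot_pi_div_two_mul_self, mul_neg, mul_one, neg_mul, transpose_mul_transpose_inv hA]

theorem toEuclideanCLM_conj_Rot {A : Matrix (Fin 2) (Fin 2) ℝ} (hA : IsUnit A.det) (θ : ℝ) :
    toEuclideanCLM (𝕜 := ℝ) (Aᵀ * Rot θ * (A⁻¹)ᵀ) =
      complexRotation (toEuclideanCLM (𝕜 := ℝ) (Aᵀ * Rot (π / 2) * (A⁻¹)ᵀ)) θ := by
  rw [Rot_eq_cos_add_sin, mul_add, add_mul, mul_smul_comm, mul_smul_comm, smul_mul_assoc,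
    smul_mul_assoc, mul_one, transpose_mul_transpose_inv hA, map_add, map_smul, map_smul, map_one,
    complexRotation]

theorem ae_exists_pos_forall_le_distZ2 {A : Matrix (Fin 2) (Fin 2) ℝ} (hA : IsUnit A.det)
    {q σ : ℝ} (hq : q ≠ 0) (hσ : 1 < σ) :
    ∀ᵐ θ : ℝ, ∃ K > 0, ∀ n : Fin 2 → ℤ, n ≠ 0 →
      K / norm2 (iv n) ^ (2 * σ) ≤ distZ2 ((q • (Aᵀ * Rot θ * (A⁻¹)ᵀ)).mulVec (iv n)) := by
  have one_le (n : {n : Fin 2 → ℤ // n ≠ 0}) : 1 ≤ norm2 (iv n) := one_le_norm2_iv n.2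
  have hJ : toEuclideanCLM (𝕜 := ℝ) (Aᵀ * Rot (π / 2) * (A⁻¹)ᵀ) *
      toEuclideanCLM (𝕜 := ℝ) (Aᵀ * Rot (π / 2) * (A⁻¹)ᵀ) = -1 := by
    rw [← map_mul, conj_Rot_pi_div_two_mul_self hA, map_neg, map_one]
  have key := ae_exists_pos_forall_le_dist_complexRotation hJ one_pos pairwise_one_le_dist_range_iv
    (v := fun n : {n : Fin 2 → ℤ // n ≠ 0} ↦ q • WithLp.toLp 2 (iv n))
    (w := fun n ↦ norm2 (iv n) ^ (-(2 * σ))) (abs_pos.mpr hq)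
    (fun n ↦ by
      rw [norm_smul, ← norm2_eq_norm_toLp]
      exact le_mul_of_one_le_right (abs_nonneg q) (one_le n))
    (fun n ↦ Real.rpow_pos_of_pos (one_pos.trans_le (one_le n)) _)
    (summable_norm2_iv_rpow (by linarith))
  filter_upwards [key] with θ ⟨K, hK, h⟩
  refine ⟨K, hK, fun n hn ↦ le_ciInf fun m ↦ ?_⟩
  have hnm := h ⟨n, hn⟩ _ ⟨m, rfl⟩
  rwa [← toEuclideanCLM_conj_Rot hA, map_smul, toEuclideanCLM_toLp, ← WithLp.toLp_smul,
    dist_eq_norm, ← WithLp.toLp_sub, ← norm2_eq_norm_toLp, ← smul_mulVec,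
    Real.rpow_neg (norm2_nonneg _), ← div_eq_mul_inv] at hnm

theorem div_norm2_rpow_le_of_le {K K' c s : ℝ} (v : Fin 2 → ℝ) (hK : K ≤ K')
    (h : K' / norm2 v ^ s ≤ c) : K / norm2 v ^ s ≤ c :=
  (div_le_div_of_nonneg_right hK (Real.rpow_nonneg (norm2_nonneg _) s)).trans h

theorem diophantine_generic_general (A : Matrix (Fin 2) (Fin 2) ℝ) (hA : IsUnit A.det)
    (q σ : ℝ) (hq : q ≠ 0) (hσ : 1 < σ) :
    ∀ᵐ θ : ℝ, ∃ K > 0, IsDiophantine A q K σ θ := by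
  have forward := ae_exists_pos_forall_le_distZ2 hA hq hσ
  have backward := (Measure.measurePreserving_neg volume).quasiMeasurePreserving.ae
    (ae_exists_pos_forall_le_distZ2 hA (inv_ne_zero hq) hσ)
  filter_upwards [forward, backward] with θ ⟨K, hK, h⟩ ⟨K', hK', h'⟩
  exact ⟨min K K', lt_min hK hK', fun n hn ↦
    ⟨div_norm2_rpow_le_of_le _ (min_le_left K K') (h n hn),
      div_norm2_rpow_le_of_le _ (min_le_right K K') (h' n hn)⟩⟩

/-- Proposition: genericity of Diophantine 2D rotations. -/
theorem diophantine_generic (A : Matrix (Fin 2) (Fin 2) ℝ) (hA : IsUnit A.det)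
    (q σ : ℝ) (hq : 0 < q) (hσ : (1433 : ℝ) / 1248 < σ) :
    ∀ᵐ θ : ℝ, ∃ K > 0, IsDiophantine A q K σ θ :=
  diophantine_generic_general A hA q σ hq.ne' (by linarith)

end
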